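/- Let σ > 0 and λ_U > 0, let A ∈ ℝ^{m×n}, let U ∈ ℝ^{n×n} be symmetric with λ_U·I_n − U² positive semidefinite, let z⁰ ∈ ℝ^m, let w⁰, v̄, x ∈ ℝ^n, and set x̄ := x − σ·(Aᵀz⁰ + Uᵀw⁰ + v̄). Then w½ := w⁰ + (1/(σ·λ_U))·U·(2x̄ − x) is the unique minimizer over ℝ^n of the function w ↦ −⟨x̄, Uᵀw⟩ + (σ/2)‖Aᵀz⁰ + Uᵀw + v̄‖² + (σ/2)⟨w − w⁰, (λ_U·I_n − U²)(w − w⁰)⟩. -/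

import Mathlib

/-!
The `-U²` part of the proximal term cancels the quadratic `‖U(w - w⁰)‖²` produced by the penalty
term. With `p = x̄ - σ(Aᵀz⁰ + Uᵀw⁰ + v̄) = 2x̄ - x`, the objective is therefore the isotropic
quadratic `F w⁰ - ⟨U p, w - w⁰⟩ + (σ λ_U / 2) ‖w - w⁰‖²` (`objective_expand`). Completing the square
gives `F w = F w½ + (σ λ_U / 2) ‖w - w½‖²`, which yields both minimality and uniqueness.
-/

open Matrix

noncomputable section

/-- Euclidean norm on `Fin d → ℝ`, `‖x‖ = √⟨x,x⟩`. -/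
def euclNorm {d : ℕ} (x : Fin d → ℝ) : ℝ := Real.sqrt (x ⬝ᵥ x)

lemma dotProduct_self_nonneg' {d : ℕ} (x : Fin d → ℝ) : 0 ≤ x ⬝ᵥ x :=
  Finset.sum_nonneg fun i _ => mul_self_nonneg (x i)

lemma euclNorm_sq {d : ℕ} (x : Fin d → ℝ) : euclNorm x ^ 2 = x ⬝ᵥ x :=
  Real.sq_sqrt (dotProduct_self_nonneg' x)

/-- Expansion of the objective about `w0` in the displacement `d = w - w0`; `c` stands for the
part of the penalty residual that does not depend on `w`. -/
lemma objective_expand {n : ℕ} (σ lU : ℝ) (U : Matrix (Fin n) (Fin n) ℝ) (hUsym : Uᵀ = U)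
    (c y w0 d : Fin n → ℝ) :
    -(y ⬝ᵥ (U *ᵥ (w0 + d))) + σ / 2 * ((c + U *ᵥ (w0 + d)) ⬝ᵥ (c + U *ᵥ (w0 + d))) +
        σ / 2 * (d ⬝ᵥ ((lU • (1 : Matrix (Fin n) (Fin n) ℝ) - U * U) *ᵥ d)) =
      -(y ⬝ᵥ (U *ᵥ w0)) + σ / 2 * ((c + U *ᵥ w0) ⬝ᵥ (c + U *ᵥ w0)) +
        σ * lU / 2 * (d ⬝ᵥ d) - (U *ᵥ (y - σ • (c + U *ᵥ w0))) ⬝ᵥ d := by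
  have hadj : ∀ u v : Fin n → ℝ, (U *ᵥ u) ⬝ᵥ v = u ⬝ᵥ (U *ᵥ v) := fun u v => by
    rw [dotProduct_mulVec, ← mulVec_transpose, hUsym]
  have hUU : d ⬝ᵥ ((U * U) *ᵥ d) = (U *ᵥ d) ⬝ᵥ (U *ᵥ d) := by
    rw [← mulVec_mulVec, hadj]
  rw [hadj, sub_mulVec, dotProduct_sub, hUU, smul_mulVec, one_mulVec, mulVec_add, ← add_assoc]
  generalize U *ᵥ d = b
  generalize U *ᵥ w0 = a
  generalize c + a = g
  simp only [dotProduct_add, add_dotProduct, sub_dotProduct, smul_dotProduct, dotProduct_smul,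
    smul_eq_mul, dotProduct_comm b g]
  ring

/-- **Closed-form first `w`-update (equation (26) of the paper).** -/
theorem w_half_update_closed_form
    (m n : ℕ) (σ lU : ℝ) (hσ : 0 < σ) (hlU : 0 < lU)
    (A : Matrix (Fin m) (Fin n) ℝ)
    (U : Matrix (Fin n) (Fin n) ℝ) (hUsym : Uᵀ = U)
    (hpsd : ∀ y : Fin n → ℝ,
      0 ≤ y ⬝ᵥ ((lU • (1 : Matrix (Fin n) (Fin n) ℝ) - U * U) *ᵥ y))
    (z0 : Fin m → ℝ) (w0 vbar x : Fin n → ℝ) :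
    let xbar : Fin n → ℝ := x - σ • (Aᵀ *ᵥ z0 + Uᵀ *ᵥ w0 + vbar)
    let wh : Fin n → ℝ := w0 + (σ * lU)⁻¹ • (U *ᵥ ((2 : ℝ) • xbar - x))
    let F : (Fin n → ℝ) → ℝ := fun w =>
      -(xbar ⬝ᵥ (Uᵀ *ᵥ w)) + σ / 2 * euclNorm (Aᵀ *ᵥ z0 + Uᵀ *ᵥ w + vbar) ^ 2 +
        σ / 2 * ((w - w0) ⬝ᵥ ((lU • (1 : Matrix (Fin n) (Fin n) ℝ) - U * U) *ᵥ (w - w0)))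
    -- `wh` is the unique minimizer of `F`
    (∀ w : Fin n → ℝ, F wh ≤ F w) ∧
      ∀ w' : Fin n → ℝ, (∀ w : Fin n → ℝ, F w' ≤ F w) → w' = wh := by
  intro xbar wh F
  have hs : 0 < σ * lU := mul_pos hσ hlU
  have hp : (2 : ℝ) • xbar - x = xbar - σ • ((Aᵀ *ᵥ z0 + vbar) + U *ᵥ w0) := by
    simp only [xbar, hUsym]
    module
  have hF : ∀ d, F (w0 + d) = F w0 + σ * lU / 2 * (d ⬝ᵥ d)
      - (U *ᵥ ((2 : ℝ) • xbar - x)) ⬝ᵥ d := by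
    intro d
    have h := objective_expand σ lU U hUsym (Aᵀ *ᵥ z0 + vbar) xbar w0 d
    rw [← hp] at h
    simp only [F, euclNorm_sq, hUsym, add_sub_cancel_left, sub_self, zero_dotProduct, mul_zero,
      add_zero, add_right_comm _ _ vbar]
    exact h
  have key : ∀ w, F w = F wh + σ * lU / 2 * ((w - wh) ⬝ᵥ (w - wh)) := by
    intro w
    obtain ⟨d, rfl⟩ : ∃ d, w = w0 + d := ⟨w - w0, by abel⟩
    set e := (σ * lU)⁻¹ • (U *ᵥ ((2 : ℝ) • xbar - x)) with he
    have hUp : U *ᵥ ((2 : ℝ) • xbar - x) = (σ * lU) • e := by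
      rw [he, smul_inv_smul₀ hs.ne']
    have hwh : wh = w0 + e := rfl
    rw [hwh, hF d, hF e, hUp, add_sub_add_left_eq_sub]
    simp only [dotProduct_sub, sub_dotProduct, smul_dotProduct, smul_eq_mul, dotProduct_comm e d]
    ring
  refine ⟨fun w => ?_, fun w' h => ?_⟩
  · rw [key w]
    have := dotProduct_self_nonneg' (w - wh)
    exact le_add_of_nonneg_right (by positivity)
  · have h1 := h wh
    rw [key w'] at h1
    have h2 := dotProduct_self_nonneg' (w' - wh)
    have h3 : (w' - wh) ⬝ᵥ (w' - wh) = 0 := by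
      refine le_antisymm (nonpos_of_mul_nonpos_right ?_ (half_pos hs)) h2
      linarith
    exact sub_eq_zero.mp (dotProduct_self_eq_zero.mp h3)
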